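/- If ζ is a primitive root of unity of odd order 2k+1, then as q approaches ζ radially within the unit disk, lim_{q→ζ} ( ψ(q) − (q²,−q,−q;q²)_∞/(2(−q²,q;q²)_∞) ) = −Σ_{n=0}^{k} (1−ζ)(1−ζ³)···(1−ζ^{2n−1}) (−1)^n. -/

import Mathlib

open scoped BigOperators
open Filter

/-- finite q-Pochhammer symbol (a;q)_n -/
noncomputable def qP (a q : ℂ) (n : ℕ) : ℂ := ∏ i ∈ Finset.range n, (1 - a * q ^ i)

/-- q-Pochhammer symbol extended to integer index: (a;q)_{-n} = 1/(a q^{-n};q)_n -/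
noncomputable def qPZ (a q : ℂ) : ℤ → ℂ
  | Int.ofNat n => qP a q n
  | Int.negSucc n => 1 / qP (a * q ^ (-(n + 1 : ℤ))) q (n + 1)

/-- infinite q-Pochhammer symbol (a;q)_∞ -/
noncomputable def qPInf (a q : ℂ) : ℂ := ∏' n : ℕ, (1 - a * q ^ n)

/-- Ramanujan's third order mock theta function ψ -/
noncomputable def psi3 (q : ℂ) : ℂ := ∑' n : ℕ, q ^ ((n + 1) ^ 2) / qP q (q ^ 2) (n + 1)

lemma qP_succ (a q : ℂ) (n : ℕ) : qP a q (n + 1) = qP a q n * (1 - a * q ^ n) :=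
  Finset.prod_range_succ _ _

lemma qP_add (a q : ℂ) (m n : ℕ) : qP a q (m + n) = qP a q m * qP (a * q ^ m) q n := by
  simp only [qP, Finset.prod_range_add, pow_add, mul_assoc]

lemma qP_succ_left (a q : ℂ) (n : ℕ) : qP a q (n + 1) = (1 - a) * qP (a * q) q n := by
  rw [add_comm, qP_add]
  simp [qP]

lemma one_sub_mul_pow_ne_zero {a q : ℂ} (hq : ‖q‖ < 1) (ha : ‖a‖ < 1) (n : ℕ) :
    1 - a * q ^ n ≠ 0 := by
  intro h
  have h1 : ‖a * q ^ n‖ < 1 := by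
    rw [norm_mul, norm_pow]
    calc ‖a‖ * ‖q‖ ^ n ≤ ‖a‖ * 1 := by gcongr; exact pow_le_one₀ (norm_nonneg _) hq.le
      _ < 1 := by simpa using ha
  rw [← sub_eq_zero.1 h] at h1
  simp at h1

lemma qP_ne_zero {a q : ℂ} (hq : ‖q‖ < 1) (ha : ‖a‖ < 1) (n : ℕ) : qP a q n ≠ 0 :=
  Finset.prod_ne_zero_iff.2 fun _ _ => one_sub_mul_pow_ne_zero hq ha _

lemma summable_norm_neg_mul_pow (a : ℂ) {q : ℂ} (hq : ‖q‖ < 1) :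
    Summable fun n : ℕ => ‖-(a * q ^ n)‖ := by
  simp only [norm_neg, norm_mul, norm_pow]
  exact (summable_geometric_of_lt_one (norm_nonneg _) hq).mul_left _

lemma tendsto_qP (a : ℂ) {q : ℂ} (hq : ‖q‖ < 1) :
    Tendsto (qP a q) atTop (nhds (qPInf a q)) := by
  have := (multipliable_one_add_of_summable
    (summable_norm_neg_mul_pow a hq)).tendsto_prod_tprod_nat
  simp only [← sub_eq_add_neg] at this
  exact this

lemma qPInf_ne_zero {a q : ℂ} (hq : ‖q‖ < 1) (ha : ‖a‖ < 1) : qPInf a q ≠ 0 := by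
  have := tprod_one_add_ne_zero_of_summable (f := fun n : ℕ => -(a * q ^ n))
    (fun n => by simpa only [← sub_eq_add_neg] using one_sub_mul_pow_ne_zero hq ha n)
    (summable_norm_neg_mul_pow a hq)
  simp only [← sub_eq_add_neg] at this
  exact this

lemma qPInf_eq_one_sub_mul (a : ℂ) {q : ℂ} (hq : ‖q‖ < 1) :
    qPInf a q = (1 - a) * qPInf (a * q) q := by
  refine tendsto_nhds_unique ((tendsto_qP a hq).comp (tendsto_add_atTop_nat 1)) ?_
  refine ((tendsto_qP (a * q) hq).const_mul (1 - a)).congr fun n => ?_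
  simp [qP_succ_left]

lemma exists_norm_qP_le (a : ℂ) {q : ℂ} (hq : ‖q‖ < 1) : ∃ C, 0 < C ∧ ∀ n, ‖qP a q n‖ ≤ C := by
  obtain ⟨C, hC⟩ := (tendsto_qP a hq).norm.bddAbove_range
  exact ⟨max C 1, by positivity, fun n => (hC ⟨n, rfl⟩).trans (le_max_left _ _)⟩

lemma exists_norm_inv_qP_le {a q : ℂ} (hq : ‖q‖ < 1) (ha : ‖a‖ < 1) :
    ∃ C, 0 < C ∧ ∀ n, ‖(qP a q n)⁻¹‖ ≤ C := by
  obtain ⟨C, hC⟩ := ((tendsto_qP a hq).inv₀ (qPInf_ne_zero hq ha)).norm.bddAbove_range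
  exact ⟨max C 1, by positivity, fun n => (hC ⟨n, rfl⟩).trans (le_max_left _ _)⟩

/-- The nonnegative-index terms of the bilateral series `∑ q ^ (n ^ 2) / (c q; q²)_n`. -/
noncomputable def posTerm (q c : ℂ) (n : ℕ) : ℂ := q ^ (n ^ 2) / qP (c * q) (q ^ 2) n

/-- The term of index `-n` of the bilateral series `∑ q ^ (n ^ 2) / (c q; q²)_n`. -/
noncomputable def negTerm (q c : ℂ) (n : ℕ) : ℂ := ∏ j ∈ Finset.range n, (q ^ (2 * j + 1) - c)

/-- The bilateral series `∑ q ^ (n ^ 2) / (c q; q²)_n`. -/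
noncomputable def bilateral (q c : ℂ) : ℂ := ∑' n, posTerm q c n + ∑' n, negTerm q c (n + 1)

lemma norm_sq_lt_one {q : ℂ} (hq : ‖q‖ < 1) : ‖q ^ 2‖ < 1 := by
  rw [norm_pow]; exact pow_lt_one₀ (norm_nonneg _) hq two_ne_zero

lemma norm_mul_lt_one {c q : ℂ} (hq : ‖q‖ < 1) (hc : ‖c‖ ≤ 1) : ‖c * q‖ < 1 := by
  rw [norm_mul]
  exact lt_of_le_of_lt (mul_le_of_le_one_left (norm_nonneg _) hc) hq

lemma posTerm_shift {q c : ℂ} (hq : ‖q‖ < 1) (hc : ‖c‖ ≤ 1) (n : ℕ) :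
    posTerm q (c * q ^ 2) n = (1 - c * q) * (posTerm q c n + c * posTerm q c (n + 1)) := by
  have h0 := qP_ne_zero (norm_sq_lt_one hq) (norm_mul_lt_one hq hc)
  have h1 := one_sub_mul_pow_ne_zero (norm_sq_lt_one hq) (norm_mul_lt_one hq hc)
  have h2 := qP_succ_left (c * q) (q ^ 2) n
  have h3 := h0 (n + 1)
  have h4 : qP (c * q ^ 2 * q) (q ^ 2) n ≠ 0 := by
    rw [h2] at h3
    rw [mul_right_comm]
    exact right_ne_zero_of_mul h3
  have h5 : 1 - c * q ≠ 0 := by simpa using h1 0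
  rw [mul_right_comm] at h4
  have h6 : qP (c * q * q ^ 2) (q ^ 2) n = qP (c * q) (q ^ 2) n * (1 - c * q * (q ^ 2) ^ n) /
      (1 - c * q) := by
    rw [← qP_succ, h2]; field_simp
  have h7 := h1 n
  have h8 := h0 n
  unfold posTerm
  rw [mul_right_comm c, h6, qP_succ]
  field_simp
  ring

lemma negTerm_shift (q c : ℂ) (n : ℕ) :
    negTerm q (c * q ^ 2) (n + 1) = (1 - c * q) * (negTerm q c (n + 1) + c * negTerm q c n) := by
  have h : negTerm q (c * q ^ 2) (n + 1) = (1 - c * q) * q ^ (2 * n + 1) * negTerm q c n := by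
    simp only [negTerm]
    induction n with
    | zero => simp; ring
    | succ n ih =>
      rw [Finset.prod_range_succ, ih, Finset.prod_range_succ _ n]
      ring
  rw [h, negTerm, negTerm, Finset.prod_range_succ]
  ring

/-- Dominating sequence for `negTerm`. -/
noncomputable def negBound (q : ℂ) (r : ℝ) (n : ℕ) : ℝ :=
  ∏ j ∈ Finset.range n, (‖q‖ ^ (2 * j + 1) + r)

lemma summable_negBound {q : ℂ} (hq : ‖q‖ < 1) {r : ℝ} (hr0 : 0 < r) (hr : r < 1) :
    Summable (negBound q r) := by
  have hpos : ∀ n, 0 < negBound q r n := fun n => Finset.prod_pos fun j _ => by positivity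
  refine summable_of_ratio_test_tendsto_lt_one hr (.of_forall fun n => (hpos n).ne') ?_
  have h1 : Tendsto (fun n : ℕ => ‖q‖ ^ (2 * n + 1) + r) atTop (nhds (0 + r)) := by
    refine Tendsto.add_const r ((tendsto_pow_atTop_nhds_zero_of_lt_one (norm_nonneg _) hq).comp ?_)
    exact tendsto_atTop_mono (fun n => by simp; omega) tendsto_id
  rw [zero_add] at h1
  refine h1.congr fun n => ?_
  rw [Real.norm_of_nonneg (hpos _).le, Real.norm_of_nonneg (hpos _).le, eq_div_iff (hpos n).ne',
    negBound, negBound, Finset.prod_range_succ, mul_comm]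

lemma norm_negTerm_le {q c : ℂ} {r : ℝ} (hc : ‖c‖ ≤ r) (n : ℕ) :
    ‖negTerm q c n‖ ≤ negBound q r n := by
  rw [negTerm, negBound, norm_prod]
  gcongr with j
  exact (norm_sub_le _ _).trans (by rw [norm_pow]; gcongr)

lemma summable_negTerm {q c : ℂ} (hq : ‖q‖ < 1) (hc : ‖c‖ < 1) : Summable (negTerm q c) := by
  obtain ⟨r, h1, h2⟩ := exists_between hc
  exact .of_norm_bounded (summable_negBound hq ((norm_nonneg _).trans_lt h1) h2)
    fun n => norm_negTerm_le h1.le n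

lemma summable_norm_pow_sq {q : ℂ} (hq : ‖q‖ < 1) : Summable fun n : ℕ => ‖q‖ ^ (n ^ 2) := by
  refine .of_nonneg_of_le (fun n => by positivity) (fun n => ?_)
    (summable_geometric_of_lt_one (norm_nonneg q) hq)
  exact pow_le_pow_of_le_one (norm_nonneg _) hq.le (by nlinarith [Nat.le_mul_self n])

lemma exists_norm_posTerm_le {q c : ℂ} (hq : ‖q‖ < 1) (hc : ‖c‖ ≤ 1) :
    ∃ C : ℝ, ∀ m n, ‖posTerm q (c * (q ^ 2) ^ m) n‖ ≤ C * ‖q‖ ^ (n ^ 2) := by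
  obtain ⟨A, hA, hA'⟩ := exists_norm_qP_le (c * q) (norm_sq_lt_one hq)
  obtain ⟨B, hB, hB'⟩ := exists_norm_inv_qP_le (norm_sq_lt_one hq) (norm_mul_lt_one hq hc)
  refine ⟨A * B, fun m n => ?_⟩
  have h0 := qP_ne_zero (norm_sq_lt_one hq) (norm_mul_lt_one hq hc)
  have h1 : posTerm q (c * (q ^ 2) ^ m) n =
      q ^ (n ^ 2) * (qP (c * q) (q ^ 2) m * (qP (c * q) (q ^ 2) (m + n))⁻¹) := by
    rw [posTerm, qP_add, mul_right_comm c, mul_inv, mul_inv_cancel_left₀ (h0 m), div_eq_mul_inv]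
  rw [h1, norm_mul, norm_mul, norm_pow, mul_comm]
  gcongr
  · exact hA' _
  · exact hB' _

lemma summable_posTerm {q c : ℂ} (hq : ‖q‖ < 1) (hc : ‖c‖ ≤ 1) : Summable (posTerm q c) := by
  obtain ⟨C, hC⟩ := exists_norm_posTerm_le hq hc
  exact .of_norm_bounded ((summable_norm_pow_sq hq).mul_left C) fun n => by simpa using hC 0 n

lemma bilateral_shift {q c : ℂ} (hq : ‖q‖ < 1) (hc : ‖c‖ < 1) :
    bilateral q (c * q ^ 2) = (1 - c * q) * (1 + c) * bilateral q c := by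
  have hp := summable_posTerm hq hc.le
  have hn := summable_negTerm hq hc
  have hp1 := (summable_nat_add_iff 1).2 hp
  have hn1 := (summable_nat_add_iff 1).2 hn
  unfold bilateral
  simp only [posTerm_shift hq hc.le, negTerm_shift]
  rw [tsum_mul_left, tsum_mul_left, hp.tsum_add (hp1.mul_left c), hn1.tsum_add (hn.mul_left c),
    tsum_mul_left, tsum_mul_left, hp.tsum_eq_zero_add, hn.tsum_eq_zero_add]
  simp [posTerm, negTerm, qP]
  ring

lemma bilateral_mul_pow {q c : ℂ} (hq : ‖q‖ < 1) (hc : ‖c‖ < 1) (m : ℕ) :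
    bilateral q (c * (q ^ 2) ^ m) =
      bilateral q c * qP (c * q) (q ^ 2) m * qP (-c) (q ^ 2) m := by
  induction m with
  | zero => simp [qP]
  | succ m ih =>
    have h : ‖c * (q ^ 2) ^ m‖ < 1 := by
      rw [mul_comm]
      refine norm_mul_lt_one hc ?_
      rw [norm_pow]
      exact pow_le_one₀ (norm_nonneg _) (norm_sq_lt_one hq).le
    rw [pow_succ, ← mul_assoc, bilateral_shift hq h, ih, qP_succ, qP_succ]
    ring

lemma tendsto_mul_sq_pow {q : ℂ} (c : ℂ) (hq : ‖q‖ < 1) :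
    Tendsto (fun m : ℕ => c * (q ^ 2) ^ m) atTop (nhds 0) := by
  simpa using (tendsto_pow_atTop_nhds_zero_of_norm_lt_one (norm_sq_lt_one hq)).const_mul c

lemma tendsto_bilateral {q c : ℂ} (hq : ‖q‖ < 1) (hc : ‖c‖ < 1) :
    Tendsto (fun m : ℕ => bilateral q (c * (q ^ 2) ^ m)) atTop (nhds (bilateral q 0)) := by
  have hlim := tendsto_mul_sq_pow c hq
  refine Tendsto.add ?_ ?_
  · obtain ⟨C, hC⟩ := exists_norm_posTerm_le hq hc.le
    refine tendsto_tsum_of_dominated_convergence ((summable_norm_pow_sq hq).mul_left C)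
      (fun n => ?_) (.of_forall fun m n => hC m n)
    have hcont : ContinuousAt (fun c => posTerm q c n) 0 := by
      unfold posTerm qP
      refine ContinuousAt.div (by fun_prop) (by fun_prop) (by simp)
    exact hcont.tendsto.comp hlim
  · obtain ⟨r, h1, h2⟩ := exists_between hc
    have hs := summable_negBound hq ((norm_nonneg _).trans_lt h1) h2
    refine tendsto_tsum_of_dominated_convergence ((summable_nat_add_iff 1).2 hs)
      (fun n => ?_) (.of_forall fun m n => norm_negTerm_le ?_ _)
    · have hcont : Continuous (fun c => negTerm q c (n + 1)) := by
        unfold negTerm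
        fun_prop
      exact (hcont.tendsto 0).comp hlim
    · rw [norm_mul, norm_pow]
      exact (mul_le_of_le_one_right (norm_nonneg _)
        (pow_le_one₀ (norm_nonneg _) (norm_sq_lt_one hq).le)).trans h1.le

/-- A limiting case of Ramanujan's `₁ψ₁` summation. -/
lemma bilateral_zero_eq {q c : ℂ} (hq : ‖q‖ < 1) (hc : ‖c‖ < 1) :
    bilateral q 0 = bilateral q c * qPInf (c * q) (q ^ 2) * qPInf (-c) (q ^ 2) := by
  refine tendsto_nhds_unique (tendsto_bilateral hq hc) ?_
  simp only [bilateral_mul_pow hq hc]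
  exact ((tendsto_qP _ (norm_sq_lt_one hq)).const_mul _).mul (tendsto_qP _ (norm_sq_lt_one hq))

/-- Euler's expansion `∑ q ^ (n ^ 2) x ^ n / (q²; q²)_n`. -/
noncomputable def eulerSum (q x : ℂ) : ℂ := ∑' n, posTerm q q n * x ^ n

lemma norm_posTerm_mul_pow_le (q : ℂ) {x : ℂ} (hx : ‖x‖ ≤ 1) (n : ℕ) :
    ‖posTerm q q n * x ^ n‖ ≤ ‖posTerm q q n‖ := by
  rw [norm_mul, norm_pow]
  exact mul_le_of_le_one_right (norm_nonneg _) (pow_le_one₀ (norm_nonneg _) hx)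

lemma eulerSum_shift {q : ℂ} (hq : ‖q‖ < 1) {x : ℂ} (hx : ‖x‖ ≤ 1) :
    eulerSum q x = (1 + x * q) * eulerSum q (x * q ^ 2) := by
  have hs : ∀ {y : ℂ}, ‖y‖ ≤ 1 → Summable fun n => posTerm q q n * y ^ n := fun hy =>
    .of_norm_bounded (summable_posTerm hq hq.le).norm (norm_posTerm_mul_pow_le q hy)
  have hx' : ‖x * q ^ 2‖ ≤ 1 := (norm_mul_lt_one (norm_sq_lt_one hq) hx).le
  have key : ∀ n, posTerm q q (n + 1) * x ^ (n + 1) =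
      posTerm q q (n + 1) * (x * q ^ 2) ^ (n + 1) + x * q * (posTerm q q n * (x * q ^ 2) ^ n) := by
    intro n
    have h1 := one_sub_mul_pow_ne_zero (norm_sq_lt_one hq) (norm_mul_lt_one hq hq.le) n
    have h2 : posTerm q q n = q ^ (n ^ 2) * (1 - q * q * (q ^ 2) ^ n) /
        (qP (q * q) (q ^ 2) n * (1 - q * q * (q ^ 2) ^ n)) := by
      rw [mul_div_mul_right _ _ h1, posTerm]
    rw [h2, posTerm, qP_succ, div_eq_mul_inv, div_eq_mul_inv]
    generalize (qP (q * q) (q ^ 2) n * (1 - q * q * (q ^ 2) ^ n))⁻¹ = w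
    ring
  unfold eulerSum
  rw [(hs hx).tsum_eq_zero_add, tsum_congr key,
    ((summable_nat_add_iff 1).2 (hs hx')).tsum_add ((hs hx').mul_left _), tsum_mul_left, add_mul,
    one_mul, ← add_assoc, (hs hx').tsum_eq_zero_add]
  simp

lemma tsum_posTerm_self {q : ℂ} (hq : ‖q‖ < 1) : ∑' n, posTerm q q n = qPInf (-q) (q ^ 2) := by
  have h1 : ∀ m : ℕ, ∑' n, posTerm q q n = qP (-q) (q ^ 2) m * eulerSum q ((q ^ 2) ^ m) := by
    intro m
    induction m with
    | zero => simp [qP, eulerSum]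
    | succ m ih =>
      rw [ih, eulerSum_shift hq, qP_succ, pow_succ (q ^ 2) m]
      · ring
      · rw [norm_pow]
        exact pow_le_one₀ (norm_nonneg _) (norm_sq_lt_one hq).le
  have h2 : Tendsto (fun m : ℕ => eulerSum q ((q ^ 2) ^ m)) atTop (nhds (eulerSum q 0)) := by
    have hlim := tendsto_pow_atTop_nhds_zero_of_norm_lt_one (norm_sq_lt_one hq)
    refine tendsto_tsum_of_dominated_convergence (summable_posTerm hq hq.le).norm
      (fun n => ((hlim.pow n).const_mul _)) (.of_forall fun m n => norm_posTerm_mul_pow_le q ?_ n)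
    rw [norm_pow]
    exact pow_le_one₀ (norm_nonneg _) (norm_sq_lt_one hq).le
  have h3 : eulerSum q 0 = 1 := by
    rw [eulerSum, tsum_eq_single 0 (fun n hn => by simp [hn])]
    simp [posTerm, qP]
  refine tendsto_nhds_unique tendsto_const_nhds (((tendsto_qP _ (norm_sq_lt_one hq)).mul h2).congr
    fun m => (h1 m).symm) |>.trans ?_
  rw [h3, mul_one]

/-- The Jacobi triple product for `∑ q ^ (n ^ 2)`. -/
lemma bilateral_zero {q : ℂ} (hq : ‖q‖ < 1) :
    bilateral q 0 = qPInf (q ^ 2) (q ^ 2) * qPInf (-q) (q ^ 2) * qPInf (-q) (q ^ 2) := by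
  have h : ∑' n, negTerm q q (n + 1) = 0 := by
    have : ∀ n, negTerm q q (n + 1) = 0 := fun n =>
      Finset.prod_eq_zero (Finset.mem_range.2 n.succ_pos) (by simp)
    simp [this]
  rw [bilateral_zero_eq hq hq, bilateral, h, add_zero, tsum_posTerm_self hq, ← sq q]
  ring

/-- Fine's series `∑ (q; q²)_n x ^ n`. -/
noncomputable def fineSum (q x : ℂ) : ℂ := ∑' n, qP q (q ^ 2) n * x ^ n

lemma summable_fineSum {q x : ℂ} (hq : ‖q‖ < 1) (hx : ‖x‖ < 1) :
    Summable fun n => qP q (q ^ 2) n * x ^ n := by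
  obtain ⟨C, -, hC⟩ := exists_norm_qP_le q (norm_sq_lt_one hq)
  refine .of_norm_bounded ((summable_geometric_of_lt_one (norm_nonneg x) hx).mul_left C) fun n => ?_
  rw [norm_mul, norm_pow]
  gcongr
  exact hC n

lemma negTerm_one (q : ℂ) (n : ℕ) : negTerm q 1 n = (-1) ^ n * qP q (q ^ 2) n := by
  induction n with
  | zero => simp [negTerm, qP]
  | succ n ih =>
    rw [negTerm, Finset.prod_range_succ, ← negTerm, ih, qP_succ]
    ring

lemma bilateral_sq {q : ℂ} (hq : ‖q‖ < 1) :
    bilateral q (q ^ 2) = (1 - q) * (1 + 2 * psi3 q + q * fineSum q (-q ^ 2)) := by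
  have hp := summable_posTerm (c := 1) hq (by simp)
  have hp1 := (summable_nat_add_iff 1).2 hp
  have h1 : ∀ n, posTerm q (q ^ 2) n = (1 - q) * (posTerm q 1 n + posTerm q 1 (n + 1)) := by
    intro n
    simpa using posTerm_shift (c := 1) hq (by simp) n
  have h2 : ∀ n, negTerm q (q ^ 2) (n + 1) =
      (1 - q) * (q * (qP q (q ^ 2) n * (-q ^ 2) ^ n)) := by
    intro n
    have := negTerm_shift q 1 n
    rw [one_mul, one_mul, one_mul, negTerm_one, negTerm_one, qP_succ] at this
    rw [this, neg_pow (q ^ 2)]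
    ring
  have h3 : psi3 q = ∑' n, posTerm q 1 (n + 1) := by simp [psi3, posTerm]
  rw [bilateral, tsum_congr h1, tsum_congr h2, tsum_mul_left, tsum_mul_left, tsum_mul_left,
    hp.tsum_add hp1, hp.tsum_eq_zero_add, ← h3, ← fineSum]
  simp [posTerm, qP]
  ring

lemma psi3_sub_eq {q : ℂ} (hq : ‖q‖ < 1) :
    psi3 q - qPInf (q ^ 2) (q ^ 2) * qPInf (-q) (q ^ 2) * qPInf (-q) (q ^ 2) /
      (2 * qPInf (-q ^ 2) (q ^ 2) * qPInf q (q ^ 2)) = -(1 + q * fineSum q (-q ^ 2)) / 2 := by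
  have hQ := norm_sq_lt_one hq
  have h1 := qPInf_ne_zero hQ hq
  have h2 : qPInf (-q ^ 2) (q ^ 2) ≠ 0 := qPInf_ne_zero hQ (by rwa [norm_neg])
  have h3 := bilateral_zero_eq hq hQ
  rw [bilateral_zero hq, bilateral_sq hq, mul_comm (q ^ 2) q] at h3
  rw [h3]
  rw [qPInf_eq_one_sub_mul q hQ] at h1 ⊢
  have h4 := left_ne_zero_of_mul h1
  have h5 := right_ne_zero_of_mul h1
  generalize qPInf (q * q ^ 2) (q ^ 2) = A at *
  field_simp
  ring

lemma fineSum_functional {q x : ℂ} (hq : ‖q‖ < 1) (hx : ‖x‖ < 1) :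
    fineSum q x * (1 - x) + q * x * fineSum q (x * q ^ 2) = 1 := by
  have hs := summable_fineSum hq hx
  have hs' : Summable fun n => qP q (q ^ 2) n * (x * q ^ 2) ^ n :=
    summable_fineSum hq (norm_mul_lt_one (norm_sq_lt_one hq) hx.le)
  have key : ∀ n, qP q (q ^ 2) (n + 1) * x ^ (n + 1) =
      x * (qP q (q ^ 2) n * x ^ n) - q * x * (qP q (q ^ 2) n * (x * q ^ 2) ^ n) := by
    intro n
    rw [qP_succ]
    ring
  have h : fineSum q x = 1 + (x * fineSum q x - q * x * fineSum q (x * q ^ 2)) := by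
    conv_lhs => rw [fineSum, hs.tsum_eq_zero_add, tsum_congr key,
      (hs.mul_left x).tsum_sub (hs'.mul_left _), tsum_mul_left, tsum_mul_left]
    simp [fineSum, qP]
  linear_combination h

/-- Iterating an approximate first-order `q`-difference equation `m` times. -/
lemma norm_mul_prod_le_of_functional {E : ℂ → ℂ} {q : ℂ} {δ : ℝ} (hq : ‖q‖ < 1)
    (hE : ∀ x, ‖x‖ < 1 → ‖E x * (1 - x) + q * x * E (x * q ^ 2)‖ ≤ δ) {x : ℂ} (hx : ‖x‖ < 1)
    (m : ℕ) :
    ‖E x * ∏ j ∈ Finset.range m, (1 - x * (q ^ 2) ^ j)‖ ≤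
      m * 2 ^ m * δ + ‖x‖ ^ m * ‖E (x * (q ^ 2) ^ m)‖ := by
  have hδ : 0 ≤ δ := (norm_nonneg _).trans (hE x hx)
  induction m with
  | zero => simp
  | succ m ih =>
    set y := x * (q ^ 2) ^ m with hy
    have hyx : ‖y‖ ≤ ‖x‖ := by
      rw [hy, norm_mul, norm_pow]
      exact mul_le_of_le_one_right (norm_nonneg _)
        (pow_le_one₀ (norm_nonneg _) (norm_sq_lt_one hq).le)
    have hy1 : ‖y‖ < 1 := hyx.trans_lt hx
    have h2 : ‖1 - y‖ ≤ 2 := (norm_sub_le _ _).trans (by rw [norm_one]; linarith)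
    have h3 : ‖E y * (1 - y)‖ ≤ δ + ‖x‖ * ‖E (y * q ^ 2)‖ := by
      have h4 : ‖q * y * E (y * q ^ 2)‖ ≤ ‖x‖ * ‖E (y * q ^ 2)‖ := by
        rw [norm_mul, norm_mul]
        gcongr
        exact (mul_le_of_le_one_left (norm_nonneg _) hq.le).trans hyx
      have h5 := norm_sub_le (E y * (1 - y) + q * y * E (y * q ^ 2)) (q * y * E (y * q ^ 2))
      rw [add_sub_cancel_right] at h5
      linarith [hE y hy1]
    rw [Finset.prod_range_succ, ← mul_assoc, norm_mul, ← hy,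
      show x * (q ^ 2) ^ (m + 1) = y * q ^ 2 by rw [hy]; ring]
    have hxm : ‖x‖ ^ m ≤ 1 := pow_le_one₀ (norm_nonneg _) hx.le
    have h2m : (1 : ℝ) ≤ 2 ^ (m + 1) := one_le_pow₀ one_le_two
    calc _ ≤ (m * 2 ^ m * δ + ‖x‖ ^ m * ‖E y‖) * ‖1 - y‖ := by gcongr
      _ = m * 2 ^ m * δ * ‖1 - y‖ + ‖x‖ ^ m * ‖E y * (1 - y)‖ := by rw [norm_mul]; ring
      _ ≤ m * 2 ^ m * δ * 2 + ‖x‖ ^ m * (δ + ‖x‖ * ‖E (y * q ^ 2)‖) := by gcongr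
      _ = m * 2 ^ m * δ * 2 + ‖x‖ ^ m * δ + ‖x‖ ^ (m + 1) * ‖E (y * q ^ 2)‖ := by ring
      _ ≤ m * 2 ^ m * δ * 2 + 2 ^ (m + 1) * δ + ‖x‖ ^ (m + 1) * ‖E (y * q ^ 2)‖ := by
        gcongr
        exact hxm.trans h2m
      _ = _ := by push_cast; ring

lemma le_of_forall_le_add_mul {ι : Type*} {S : Set ι} {f : ι → ℝ} {φ : ι → ι} {A M : ℝ}
    (hφ : ∀ s ∈ S, φ s ∈ S) (hM : ∀ s ∈ S, f s ≤ M)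
    (hf : ∀ s ∈ S, f s ≤ A + 3 / 4 * f (φ s)) {s : ι} (hs : s ∈ S) : f s ≤ 4 * A := by
  have h : ∀ m : ℕ, ∀ s ∈ S, f s ≤ 4 * A + (3 / 4) ^ m * (M - 4 * A) := by
    intro m
    induction m with
    | zero => intro s hs; linarith [hM s hs]
    | succ m ih =>
      intro s hs
      have h1 := ih _ (hφ s hs)
      rw [pow_succ]
      linarith [hf s hs]
  have hlim : Tendsto (fun m : ℕ => 4 * A + (3 / 4 : ℝ) ^ m * (M - 4 * A)) atTop
      (nhds (4 * A + 0 * (M - 4 * A))) :=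
    ((tendsto_pow_atTop_nhds_zero_of_lt_one (by norm_num) (by norm_num)).mul_const _).const_add _
  rw [zero_mul, add_zero] at hlim
  exact ge_of_tendsto' hlim fun m => h m s hs

lemma prod_one_add_mul_pow {ω : ℂ} {N : ℕ} (hN : Odd N) (hω : IsPrimitiveRoot ω N) (y : ℂ) :
    ∏ j ∈ Finset.range N, (1 + y * ω ^ j) = 1 + y ^ N := by
  have : NeZero N := ⟨hN.pos.ne'⟩
  have h := hω.pow_add_pow_eq_prod_add_mul 1 y hN
  rw [one_pow] at h
  rw [h]
  refine Finset.prod_bij (fun j _ => ω ^ j) (fun j _ => ?_) (fun a ha b hb hab => ?_)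
    (fun z hz => ?_) (fun j _ => by rw [mul_comm])
  · rw [Polynomial.mem_nthRootsFinset hN.pos, ← pow_mul, mul_comm, pow_mul, hω.pow_eq_one, one_pow]
  · exact hω.pow_inj (Finset.mem_range.1 ha) (Finset.mem_range.1 hb) hab
  · rw [Polynomial.mem_nthRootsFinset hN.pos] at hz
    obtain ⟨i, hi, rfl⟩ := hω.eq_pow_of_pow_eq_one hz
    exact ⟨i, Finset.mem_range.2 hi, rfl⟩

/-- The limit at a root of unity of odd order `2 * k + 1` of Fine's series, as a polynomial. -/
noncomputable def finePoly (ζ : ℂ) (k : ℕ) (x : ℂ) : ℂ :=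
  ∑ n ∈ Finset.range (k + 1), qP ζ (ζ ^ 2) n * x ^ n

lemma qP_eq_zero {ζ : ℂ} {k : ℕ} (hζ : ζ ^ (2 * k + 1) = 1) : qP ζ (ζ ^ 2) (k + 1) = 0 := by
  rw [qP_succ, ← pow_mul, ← pow_succ', hζ, sub_self, mul_zero]

lemma finePoly_functional {ζ : ℂ} {k : ℕ} (hζ : ζ ^ (2 * k + 1) = 1) (x : ℂ) :
    finePoly ζ k x * (1 - x) + ζ * x * finePoly ζ k (x * ζ ^ 2) = 1 := by
  have h : ∀ m, (∑ n ∈ Finset.range m, qP ζ (ζ ^ 2) n * x ^ n) * (1 - x) +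
      ζ * x * (∑ n ∈ Finset.range m, qP ζ (ζ ^ 2) n * (x * ζ ^ 2) ^ n) =
      1 - qP ζ (ζ ^ 2) m * x ^ m := by
    intro m
    induction m with
    | zero => simp [qP]
    | succ m ih =>
      rw [Finset.sum_range_succ, Finset.sum_range_succ, qP_succ]
      linear_combination ih
  rw [finePoly, finePoly, h, qP_eq_zero hζ]
  ring

lemma finePoly_neg_sq {ζ : ℂ} {k : ℕ} (hζ : ζ ^ (2 * k + 1) = 1) :
    1 + ζ * finePoly ζ k (-ζ ^ 2) = 2 * finePoly ζ k (-1) := by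
  have h := finePoly_functional hζ (-1)
  rw [neg_one_mul] at h
  linear_combination -h

lemma continuous_finePoly (ζ : ℂ) (k : ℕ) : Continuous (finePoly ζ k) := by
  unfold finePoly
  fun_prop

lemma eventually_defect_le {ζ : ℂ} {k : ℕ} (hζ : ζ ^ (2 * k + 1) = 1) {δ : ℝ} (hδ : 0 < δ) :
    ∀ᶠ q in nhds ζ, ∀ x ∈ Metric.closedBall (0 : ℂ) 1,
      ‖1 - finePoly ζ k x * (1 - x) - q * x * finePoly ζ k (x * q ^ 2)‖ < δ := by
  refine (isCompact_closedBall _ _).eventually_forall_of_forall_eventually fun x _ => ?_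
  have hc := continuous_finePoly ζ k
  have hcont : Continuous fun z : ℂ × ℂ =>
      ‖1 - finePoly ζ k z.2 * (1 - z.2) - z.1 * z.2 * finePoly ζ k (z.2 * z.1 ^ 2)‖ := by
    fun_prop
  refine hcont.continuousAt.eventually_lt_const ?_
  beta_reduce
  rw [sub_sub, finePoly_functional hζ]
  simpa using hδ

lemma eventually_prod_gt {ζ : ℂ} {k : ℕ} (hζ : IsPrimitiveRoot ζ (2 * k + 1)) :
    ∀ᶠ q in nhds ζ, ∀ s ∈ Set.Icc (0 : ℝ) 1, 3 / 4 + s ^ (2 * k + 1) <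
      ‖∏ j ∈ Finset.range (2 * k + 1), (1 - -(s * ζ ^ 2) * (q ^ 2) ^ j)‖ := by
  refine isCompact_Icc.eventually_forall_of_forall_eventually fun s hs => ?_
  have hcont : Continuous fun z : ℂ × ℝ =>
      ‖∏ j ∈ Finset.range (2 * k + 1), (1 - -(z.2 * ζ ^ 2) * (z.1 ^ 2) ^ j)‖ -
        z.2 ^ (2 * k + 1) := by
    fun_prop
  have h2 : (3 / 4 : ℝ) < ‖∏ j ∈ Finset.range (2 * k + 1), (1 - -(s * ζ ^ 2) * (ζ ^ 2) ^ j)‖ -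
      s ^ (2 * k + 1) := by
    have hω : IsPrimitiveRoot (ζ ^ 2) (2 * k + 1) :=
      hζ.pow_of_coprime 2 (by simp)
    have h3 := prod_one_add_mul_pow ⟨k, rfl⟩ hω (s * ζ ^ 2)
    rw [mul_pow, hω.pow_eq_one, mul_one] at h3
    simp only [neg_mul, sub_neg_eq_add]
    rw [h3, show (1 : ℂ) + (s : ℂ) ^ (2 * k + 1) = ((1 + s ^ (2 * k + 1) : ℝ) : ℂ) by push_cast; rfl,
      Complex.norm_of_nonneg (by have := hs.1; positivity)]
    linarith
  filter_upwards [hcont.continuousAt.eventually_const_lt h2] with z hz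
  linarith

lemma norm_fineSum_le {q : ℂ} (hq : ‖q‖ < 1) {r : ℝ} (hr : r < 1) :
    ∃ C, ∀ x : ℂ, ‖x‖ ≤ r → ‖fineSum q x‖ ≤ C := by
  obtain ⟨C, hC0, hC⟩ := exists_norm_qP_le q (norm_sq_lt_one hq)
  refine ⟨∑' n : ℕ, C * r ^ n, fun x hx => tsum_of_norm_bounded
    ((summable_geometric_of_lt_one ((norm_nonneg x).trans hx) hr).mul_left C).hasSum fun n => ?_⟩
  rw [norm_mul, norm_pow]
  gcongr
  exact hC n

lemma tendsto_radial (ζ : ℂ) :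
    Tendsto (fun t : ℝ => (t : ℂ) * ζ) (nhdsWithin 1 (Set.Ioo (0 : ℝ) 1)) (nhds ζ) := by
  have h : Continuous fun t : ℝ => (t : ℂ) * ζ := by fun_prop
  have h1 := h.tendsto 1
  simp only [Complex.ofReal_one, one_mul] at h1
  exact h1.mono_left nhdsWithin_le_nhds

lemma tendsto_fineSum_sub_finePoly {ζ : ℂ} {k : ℕ} (hζ : IsPrimitiveRoot ζ (2 * k + 1)) :
    Tendsto (fun t : ℝ => fineSum (t * ζ) (-(t * ζ) ^ 2) - finePoly ζ k (-(t * ζ) ^ 2))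
      (nhdsWithin 1 (Set.Ioo (0 : ℝ) 1)) (nhds 0) := by
  set N := 2 * k + 1 with hN
  have hζ1 : ‖ζ‖ = 1 := hζ.norm'_eq_one (by omega)
  rw [Metric.tendsto_nhds]
  intro ε hε
  obtain ⟨δ, hδ, hδε⟩ : ∃ δ : ℝ, 0 < δ ∧ 4 * (2 * (N * 2 ^ N * δ)) < ε := by
    refine ⟨ε / (16 * (N * 2 ^ N)), by positivity, ?_⟩
    have : (N : ℝ) ≠ 0 := by positivity
    field_simp
    norm_num
  filter_upwards [(tendsto_radial ζ).eventually (eventually_defect_le hζ.pow_eq_one hδ),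
    (tendsto_radial ζ).eventually (eventually_prod_gt hζ), self_mem_nhdsWithin] with t h1 h2 ht
  obtain ⟨ht0, ht1⟩ := ht
  set q : ℂ := t * ζ with hq
  have hqn : ‖q‖ = t := by rw [hq, norm_mul, hζ1, mul_one, Complex.norm_of_nonneg ht0.le]
  have hq1 : ‖q‖ < 1 := hqn ▸ ht1
  set E : ℂ → ℂ := fun x => fineSum q x - finePoly ζ k x with hE
  have hfun : ∀ x, ‖x‖ < 1 → ‖E x * (1 - x) + q * x * E (x * q ^ 2)‖ ≤ δ := by
    intro x hx
    refine le_of_eq_of_le (congrArg norm ?_) (h1 x (by simpa using hx.le)).le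
    have := fineSum_functional hq1 hx
    simp only [hE]
    linear_combination this
  have ht2 : t ^ 2 < 1 := pow_lt_one₀ ht0.le ht1 two_ne_zero
  have hnorm : ∀ s ∈ Set.Icc 0 (t ^ 2), ‖-((s : ℂ) * ζ ^ 2)‖ = s := fun s hs => by
    rw [norm_neg, norm_mul, norm_pow, hζ1, Complex.norm_of_nonneg hs.1, one_pow, mul_one]
  obtain ⟨C, hC⟩ := norm_fineSum_le hq1 ht2
  obtain ⟨C', hC'⟩ := (isCompact_closedBall (0 : ℂ) 1).exists_bound_of_continuousOn
    (continuous_finePoly ζ k).continuousOn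
  have hmain : ∀ s ∈ Set.Icc 0 (t ^ 2), ‖E (-((s : ℂ) * ζ ^ 2))‖ ≤ 4 * (2 * (N * 2 ^ N * δ)) := by
    intro s hs
    refine le_of_forall_le_add_mul (S := Set.Icc 0 (t ^ 2))
      (f := fun s : ℝ => ‖E (-((s : ℂ) * ζ ^ 2))‖) (φ := fun s => s * (t ^ 2) ^ N) (M := C + C')
      ?_ ?_ ?_ hs
    · intro s hs
      exact ⟨mul_nonneg hs.1 (by positivity),
        (mul_le_of_le_one_right hs.1 (pow_le_one₀ (by positivity) ht2.le)).trans hs.2⟩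
    · intro s hs
      refine (norm_sub_le _ _).trans (add_le_add (hC _ ?_) (hC' _ ?_))
      · rw [hnorm s hs]; exact hs.2
      · rw [mem_closedBall_zero_iff, hnorm s hs]; exact hs.2.trans ht2.le
    · intro s hs
      have hs1 : s < 1 := hs.2.trans_lt ht2
      have h3 := norm_mul_prod_le_of_functional hq1 hfun (x := -((s : ℂ) * ζ ^ 2))
        (by rw [hnorm s hs]; exact hs1) N
      have h4 : -((s : ℂ) * ζ ^ 2) * (q ^ 2) ^ N = -(((s * (t ^ 2) ^ N : ℝ) : ℂ) * ζ ^ 2) := by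
        have h5 : (q ^ 2) ^ N = ((t : ℂ) ^ 2) ^ N := by
          rw [hq, mul_pow, mul_pow, ← pow_mul ζ, mul_comm 2 N, pow_mul ζ, hζ.pow_eq_one, one_pow,
            mul_one]
        rw [h5]
        push_cast
        ring
      rw [h4, hnorm s hs, norm_mul] at h3
      have h6 := (h2 s ⟨hs.1, hs1.le⟩).le
      have h7 : ‖E (-((s : ℂ) * ζ ^ 2))‖ * (3 / 4 + s ^ N) ≤ _ :=
        (mul_le_mul_of_nonneg_left h6 (norm_nonneg _)).trans h3
      have h8 : 0 ≤ s ^ N := pow_nonneg hs.1 N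
      have h9 : s ^ N ≤ 1 := pow_le_one₀ hs.1 hs1.le
      have h10 : 0 ≤ N * 2 ^ N * δ := by positivity
      generalize ‖E (-((s : ℂ) * ζ ^ 2))‖ = a at *
      have h11 := norm_nonneg (E (-(((s * (t ^ 2) ^ N : ℝ) : ℂ) * ζ ^ 2)))
      generalize ‖E (-(((s * (t ^ 2) ^ N : ℝ) : ℂ) * ζ ^ 2))‖ = b at *
      have h12 : 0 < 3 / 4 + s ^ N := by positivity
      refine le_of_mul_le_mul_right (h7.trans ?_) h12
      nlinarith [mul_nonneg h10 h8, mul_nonneg h11 (sub_nonneg.2 h9)]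
  have hfin := hmain (t ^ 2) ⟨by positivity, le_rfl⟩
  rw [show -(((t ^ 2 : ℝ) : ℂ) * ζ ^ 2) = -q ^ 2 by rw [hq]; push_cast; ring] at hfin
  rw [dist_zero_right]
  exact hfin.trans_lt hδε

theorem stmt3 (k : ℕ) (ζ : ℂ) (hζ : IsPrimitiveRoot ζ (2 * k + 1)) :
    Tendsto (fun t : ℝ =>
        psi3 ((t : ℂ) * ζ) -
          qPInf (((t : ℂ) * ζ) ^ 2) (((t : ℂ) * ζ) ^ 2) *
            qPInf (-((t : ℂ) * ζ)) (((t : ℂ) * ζ) ^ 2) *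
            qPInf (-((t : ℂ) * ζ)) (((t : ℂ) * ζ) ^ 2) /
          (2 * qPInf (-((t : ℂ) * ζ) ^ 2) (((t : ℂ) * ζ) ^ 2) *
            qPInf ((t : ℂ) * ζ) (((t : ℂ) * ζ) ^ 2)))
      (nhdsWithin 1 (Set.Ioo (0 : ℝ) 1))
      (nhds (-∑ n ∈ Finset.range (k + 1),
          (∏ j ∈ Finset.range n, (1 - ζ ^ (2 * j + 1))) * (-1) ^ n)) := by
  have hζ1 : ‖ζ‖ = 1 := hζ.norm'_eq_one (by omega)
  have hr := tendsto_radial ζ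
  have hP := ((continuous_finePoly ζ k).tendsto _).comp (hr.pow 2).neg
  have hF := (tendsto_fineSum_sub_finePoly hζ).add hP
  have hlim := (((hr.mul hF).const_add 1).neg).div_const 2
  rw [zero_add, finePoly_neg_sq hζ.pow_eq_one] at hlim
  have hval : -(2 * finePoly ζ k (-1)) / 2 = -∑ n ∈ Finset.range (k + 1),
      (∏ j ∈ Finset.range n, (1 - ζ ^ (2 * j + 1))) * (-1) ^ n := by
    rw [neg_div, mul_div_cancel_left₀ _ two_ne_zero, finePoly]
    simp only [qP, ← pow_mul, ← pow_succ']
  rw [hval] at hlim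
  refine hlim.congr' ?_
  filter_upwards [self_mem_nhdsWithin] with t ht
  have hq : ‖(t : ℂ) * ζ‖ < 1 := by
    rw [norm_mul, hζ1, mul_one, Complex.norm_of_nonneg ht.1.le]
    exact ht.2
  rw [psi3_sub_eq hq]
  simp
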